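/- If G is a non-abelian finite group with tp(G) > 4/81, then G has derived length exactly 2, i.e. the commutator subgroup G' is nontrivial and abelian. -/

import Mathlib

/-!
`H` acts on `G ⧸ H` by left multiplication, and its orbits are the double cosets of `H`. Counting
common transversals one double coset at a time bounds `P_G(H)` by the product of `k! / k ^ k` over
the double cosets, `k` being the number of left cosets in each (`transProb_le`). Hence
`tp(G) > 4/81` has two consequences for a non-normal subgroup `H`:

* `H` moves at most 8 cosets, because `(k! / k ^ k)² ≤ 2⁻ᵏ` for `k ≥ 2`, so `|G : H| ≤ 16`
  (`index_le_sixteen`);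
* if `|H|` is odd, `H` moves exactly 3 cosets, so either `H` is self-normalizing of index 4, or
  `|G : N(H)| = 2` and `|N(H) : H| = 3` (`odd_cases`).

The group-theoretic input is that `G'` centralizes every cyclic normal subgroup
(`commutator_le_centralizer`). Suppose that `G'` is not abelian.

Every cyclic subgroup of odd prime power order is normal (`odd_zpowers_normal`). If one is
self-normalizing of index 4, Burnside's transfer theorem yields a normal complement of order 4
containing `G'`, which is then abelian. Otherwise some normalizer has index 2 and odd order, so
`G'` has odd order. If `x ∈ G'` has prime power order and `⟨x⟩` is not normal, then `N(⟨x⟩)` has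
index 2 and is abelian modulo a subgroup of `⟨x⟩`, and elements outside `N(⟨x⟩)` invert `x` modulo
that subgroup, so `⟨x⟩` is normal after all. Therefore `G'` centralizes all its elements of prime
power order and is abelian.

With `C = C_G(G')`, the quotient `G / C` is consequently a 2-group. Let `y ∈ G'` map to a central
involution of `G / C`. Then `⟨y⟩` is not normal, and comparing `⟨y⟩` with `Z(G')` gives
`|G : C| ≤ |G : ⟨y⟩| ≤ 16` (`card_quotient_le_sixteen`). A 2-group of order at most 16 has a cyclic
derived subgroup (`commutator_isCyclic`), so `G'` is cyclic modulo its centre, hence abelian.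
-/

open scoped Pointwise Classical

/-- `T` is simultaneously a left transversal for `H` (each left coset `gH` contains exactly one
element of `T`) and a right transversal for `K` (each right coset `Kg` contains exactly one
element of `T`). -/
def IsDoubleTransversal {G : Type*} [Group G] (H K : Subgroup G) (T : Set G) : Prop :=
  (∀ g : G, ∃! t : G, t ∈ T ∧ g⁻¹ * t ∈ H) ∧ (∀ g : G, ∃! t : G, t ∈ T ∧ t * g⁻¹ ∈ K)

/-- `|DT_G(H,K)|`: the number of common transversals for the pair `(H, K)`. -/
noncomputable def numDT {G : Type*} [Group G] (H K : Subgroup G) : ℕ :=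
  Nat.card {T : Set G // IsDoubleTransversal H K T}

/-- `P_G(H,K) = |DT_G(H,K)| / |H| ^ (G:H)`, the common transversal probability. -/
noncomputable def transProb {G : Type*} [Group G] (H K : Subgroup G) : ℚ :=
  (numDT H K : ℚ) / (Nat.card H : ℚ) ^ H.index

/-- `tp(G)`: the minimum of `P_G(H) = P_G(H,H)` over all subgroups `H ≤ G`. -/
noncomputable def tp (G : Type*) [Group G] [Finite G] : ℚ :=
  haveI : Finite (Subgroup G) :=
    Finite.of_injective (fun H : Subgroup G => (H : Set G)) SetLike.coe_injective
  haveI : Fintype (Subgroup G) := Fintype.ofFinite _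
  Finset.univ.inf' Finset.univ_nonempty (fun H : Subgroup G => transProb H H)

/-! ### Counting common transversals -/

/-- `k! / k ^ k`, the factor contributed to `P_G(H)` by a double coset consisting of `k` left
cosets. -/
noncomputable def dcFactor (k : ℕ) : ℚ := (k.factorial : ℚ) / (k : ℚ) ^ k

/-- There are `|I|!` injections `I → β`, each lifting along `q` in `m ^ |I|` ways. -/
lemma card_injective_comp {I α β : Type*} [Finite I] [Finite α] [Finite β] (q : α → β) (m : ℕ)
    (hq : ∀ b, Nat.card {a // q a = b} = m) (hI : Nat.card I = Nat.card β) :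
    Nat.card {f : I → α // Function.Injective (fun i => q (f i))} =
      (Nat.card I).factorial * m ^ Nat.card I := by
  have : Fintype I := Fintype.ofFinite I
  have : Fintype α := Fintype.ofFinite α
  have : Fintype β := Fintype.ofFinite β
  let e : {f : I → α // Function.Injective (fun i => q (f i))} ≃
      (Σ s : I ↪ β, ∀ i, {a // q a = s i}) :=
    { toFun := fun f => ⟨⟨fun i => q (f.1 i), f.2⟩, fun i => ⟨f.1 i, rfl⟩⟩
      invFun := fun s => ⟨fun i => (s.2 i).1, fun i j h => s.1.injective (by
        simpa only [(s.2 i).2, (s.2 j).2] using h)⟩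
      left_inv := fun f => rfl
      right_inv := by
        rintro ⟨s, t⟩
        have hs : s = ⟨fun i => q (t i).1, fun i j h => s.injective (by
          simpa only [(t i).2, (t j).2] using h)⟩ := by
          ext i; exact (t i).2.symm
        refine Sigma.ext hs.symm ?_
        refine Function.hfunext rfl ?_
        intro i j hij
        obtain rfl := eq_of_heq hij
        refine (Subtype.heq_iff_coe_eq ?_).2 rfl
        intro x
        simp [(t i).2] }
  rw [Nat.card_congr e, Nat.card_sigma]
  simp only [Nat.card_pi, hq, Finset.prod_const, Finset.card_univ, Finset.sum_const,
    smul_eq_mul, Fintype.card_embedding_eq]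
  simp only [← Nat.card_eq_fintype_card, hI, Nat.descFactorial_self]

section Count

variable {G : Type*} [Group G] (H : Subgroup G)

/-- The number of left cosets of `H` in the double coset `o`, a double coset being encoded as an
orbit of `H` acting on `G ⧸ H` by left multiplication. -/
noncomputable def dcSize (o : Quotient (MulAction.orbitRel H (G ⧸ H))) : ℕ :=
  Nat.card {x : G ⧸ H // (Quotient.mk _ x : Quotient (MulAction.orbitRel H (G ⧸ H))) = o}

lemma dcSize_mk (x : G ⧸ H) :
    dcSize H (Quotient.mk _ x) = Nat.card (MulAction.orbit H x) := by
  refine Nat.card_congr (Equiv.subtypeEquivRight fun y => ?_)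
  rw [Quotient.eq]
  rfl

lemma card_orbit_mul [Finite G] (x : G ⧸ H) :
    Nat.card (MulAction.orbit H x) * Nat.card (MulAction.stabilizer H x) = Nat.card H := by
  have : Fintype G := Fintype.ofFinite G
  have : Fintype (G ⧸ H) := Fintype.ofFinite _
  simp only [Nat.card_eq_fintype_card]
  exact MulAction.card_orbit_mul_card_stabilizer_eq_card_group H x

lemma smul_mk_iff (h : H) (g : G) :
    h • (g : G ⧸ H) = (g : G ⧸ H) ↔ g⁻¹ * h * g ∈ H := by
  change (((h : G) * g : G) : G ⧸ H) = g ↔ _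
  rw [eq_comm, QuotientGroup.eq, mul_assoc]

/-- `H ∩ gHg⁻¹` and `H ∩ g⁻¹Hg` are conjugate. -/
lemma card_stabilizer_inv [Finite G] (g : G) :
    Nat.card (MulAction.stabilizer H (g : G ⧸ H)) =
      Nat.card (MulAction.stabilizer H ((g⁻¹ : G) : G ⧸ H)) := by
  have key : ∀ g : G, Nat.card (MulAction.stabilizer H (g : G ⧸ H)) ≤
      Nat.card (MulAction.stabilizer H ((g⁻¹ : G) : G ⧸ H)) := by
    intro g
    refine Nat.card_le_card_of_injective
      (fun h => ⟨⟨g⁻¹ * (h : H) * g, (smul_mk_iff H _ _).1 h.2⟩, ?_⟩) ?_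
    · rw [MulAction.mem_stabilizer_iff, smul_mk_iff]
      simp [mul_assoc]
    · intro a b hab
      have h1 : g⁻¹ * (a.1 : G) * g = g⁻¹ * (b.1 : G) * g := congrArg (fun z => ((z.1 : H) : G)) hab
      exact Subtype.ext (Subtype.ext (mul_left_cancel (mul_right_cancel h1)))
  refine le_antisymm (key g) ?_
  simpa using key g⁻¹

/-- Every coset `x` is `hgH` with `g` depending on the double coset only. -/
lemma exists_rep (x : G ⧸ H) : ∃ h : H,
    (((h : G) * (Quotient.out (Quotient.out (Quotient.mk (MulAction.orbitRel H (G ⧸ H)) x)) : G) :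
      G) : G ⧸ H) = x := by
  have h1 : (Quotient.mk (MulAction.orbitRel H (G ⧸ H)) x).out ∈ MulAction.orbit H x :=
    Quotient.exact (Quotient.out_eq (Quotient.mk (MulAction.orbitRel H (G ⧸ H)) x))
  obtain ⟨h, hh⟩ := h1
  refine ⟨h⁻¹, ?_⟩
  have h2 : ((h⁻¹ : H) : G) • ((Quotient.out (Quotient.out
      (Quotient.mk (MulAction.orbitRel H (G ⧸ H)) x)) : G) : G ⧸ H) = x := by
    rw [QuotientGroup.out_eq', ← hh]
    exact inv_smul_smul h x
  exact h2

/-- Only the upper bound is proved, although equality holds. An element of the coset `hgH` has the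
form `h g f⁻¹` with `f ∈ H`, and its right coset `H g f⁻¹` is determined by `f • g⁻¹H`; hence a
common transversal amounts to a choice of `f` for each left coset, subject to the elements
`f • g⁻¹H` being distinct within each double coset. -/
theorem transProb_le [Finite G] [Fintype (Quotient (MulAction.orbitRel H (G ⧸ H)))] :
    transProb H H ≤ ∏ o, dcFactor (dcSize H o) := by
  let g : Quotient (MulAction.orbitRel H (G ⧸ H)) → G := fun o => Quotient.out (Quotient.out o)
  have hrep : ∀ x : G ⧸ H, ∃ h : H, (((h : G) * g (Quotient.mk _ x) : G) : G ⧸ H) = x :=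
    exists_rep H
  choose c hc using hrep
  let r : G ⧸ H → G := fun x => (c x : G) * g (Quotient.mk _ x)
  have hr : ∀ x, ((r x : G) : G ⧸ H) = x := hc
  let p : Quotient (MulAction.orbitRel H (G ⧸ H)) → G ⧸ H := fun o => (((g o)⁻¹ : G) : G ⧸ H)
  -- the coordinates of a common transversal
  have hF : ∀ T : {T : Set G // IsDoubleTransversal H H T}, ∃ F : G ⧸ H → H,
      (∀ t, t ∈ T.1 ↔ ∃ x, t = r x * ((F x : G))⁻¹) ∧
      ∀ x y : G ⧸ H, (Quotient.mk (MulAction.orbitRel H (G ⧸ H)) x) = Quotient.mk _ y →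
        F x • p (Quotient.mk _ x) = F y • p (Quotient.mk _ x) → x = y := by
    rintro ⟨T, hT1, hT2⟩
    have h1 : ∀ x : G ⧸ H, ∃ f : H, r x * (f : G)⁻¹ ∈ T := by
      intro x
      obtain ⟨t, ⟨ht, ht'⟩, -⟩ := hT1 (r x)
      refine ⟨⟨t⁻¹ * r x, ?_⟩, ?_⟩
      · simpa using H.inv_mem ht'
      · simpa using ht
    choose F hF using h1
    refine ⟨F, fun t => ⟨fun ht => ?_, ?_⟩, ?_⟩
    · refine ⟨(t : G ⧸ H), ?_⟩
      refine (hT1 (r (t : G ⧸ H))).unique ⟨ht, ?_⟩ ⟨hF _, ?_⟩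
      · rw [← QuotientGroup.eq, hr]
      · simp
    · rintro ⟨x, rfl⟩
      exact hF x
    · intro x y hxy he
      have e1 : r x * (F x : G)⁻¹ = r y * (F y : G)⁻¹ := by
        refine (hT2 (r y * (F y : G)⁻¹)).unique ⟨hF x, ?_⟩ ⟨hF y, by simp⟩
        have e2 : (((F x : G) * (g (Quotient.mk _ x))⁻¹ : G) : G ⧸ H) =
          (((F y : G) * (g (Quotient.mk _ x))⁻¹ : G) : G ⧸ H) := he
        rw [QuotientGroup.eq] at e2
        simp only [r, ← hxy]
        have := H.mul_mem (H.mul_mem (c x).2 e2) (H.inv_mem (c y).2)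
        simpa [mul_assoc] using this
      rw [← hr x, ← hr y, QuotientGroup.eq]
      have e3 : (r x)⁻¹ * r y = (F x : G)⁻¹ * F y := by
        rw [inv_mul_eq_iff_eq_mul, ← mul_assoc, e1]; simp
      rw [e3]
      exact H.mul_mem (H.inv_mem (F x).2) (F y).2
  choose Φ hΦ1 hΦ2 using hF
  -- a common transversal is determined by its coordinates, so `numDT` is at most the product of
  -- the local counts
  have hle : numDT H H ≤ ∏ o, Nat.card {f : {x : G ⧸ H //
      (Quotient.mk _ x : Quotient (MulAction.orbitRel H (G ⧸ H))) = o} → H //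
      Function.Injective (fun i =>
        (⟨f i • p o, MulAction.mem_orbit _ _⟩ : MulAction.orbit H (p o)))} := by
    rw [← Nat.card_pi]
    refine Nat.card_le_card_of_injective (fun T o => ⟨fun x => Φ T x.1, ?_⟩) ?_
    · rintro ⟨x, hx⟩ ⟨y, hy⟩ hxy
      subst hx
      rw [Subtype.mk.injEq] at hxy
      exact Subtype.ext (hΦ2 T x y hy.symm hxy)
    · intro T U hTU
      have hFF : Φ T = Φ U := by
        funext x
        exact congrFun (congrArg Subtype.val (congrFun hTU (Quotient.mk _ x))) ⟨x, rfl⟩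
      apply Subtype.ext
      ext t
      rw [hΦ1, hΦ1, hFF]
  have hHpos : (0 : ℚ) < Nat.card H := by exact_mod_cast Nat.card_pos
  have hstab : ∀ o, dcSize H o * Nat.card (MulAction.stabilizer H (p o)) = Nat.card H := by
    intro o
    have : o = Quotient.mk _ ((g o : G) : G ⧸ H) := by
      simp only [g, Quotient.out_eq]
    conv_lhs => rw [this]
    rw [dcSize_mk, ← card_orbit_mul H ((g o : G) : G ⧸ H), card_stabilizer_inv H (g o), ← this]
  have hloc : ∀ o, Nat.card {f : {x : G ⧸ H //
      (Quotient.mk _ x : Quotient (MulAction.orbitRel H (G ⧸ H))) = o} → H //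
      Function.Injective (fun i =>
        (⟨f i • p o, MulAction.mem_orbit _ _⟩ : MulAction.orbit H (p o)))} =
      (dcSize H o).factorial * Nat.card (MulAction.stabilizer H (p o)) ^ dcSize H o := by
    intro o
    refine card_injective_comp
      (fun h : H => (⟨h • p o, MulAction.mem_orbit _ _⟩ : MulAction.orbit H (p o))) _ ?_ ?_
    · rintro ⟨_, h0, rfl⟩
      refine Nat.card_congr
        { toFun := fun h => ⟨h0⁻¹ * h.1, ?_⟩
          invFun := fun s => ⟨h0 * s.1, ?_⟩
          left_inv := fun h => by simp
          right_inv := fun s => by simp }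
      · have : h.1 • p o = h0 • p o := congrArg Subtype.val h.2
        rw [MulAction.mem_stabilizer_iff, mul_smul, this]
        exact inv_smul_smul h0 _
      · have := s.2
        rw [MulAction.mem_stabilizer_iff] at this
        refine Subtype.ext ?_
        change (h0 * s.1) • p o = h0 • p o
        rw [mul_smul, this]
    · refine Nat.eq_of_mul_eq_mul_right Nat.card_pos ((hstab o).trans ?_)
      exact (card_orbit_mul H (p o)).symm
  have hindex : H.index = ∑ o, dcSize H o := by
    rw [Subgroup.index, ← Nat.card_congr (Equiv.sigmaFiberEquiv
      (Quotient.mk (MulAction.orbitRel H (G ⧸ H)))), Nat.card_sigma]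
    rfl
  rw [transProb, div_le_iff₀ (by positivity), hindex, ← Finset.prod_pow_eq_pow_sum,
    ← Finset.prod_mul_distrib]
  refine (Nat.cast_le.2 hle).trans (le_of_eq ?_)
  rw [Nat.cast_prod]
  refine Finset.prod_congr rfl fun o _ => ?_
  rw [hloc, dcFactor, ← hstab o]
  have : (dcSize H o : ℚ) ≠ 0 := by
    intro h0
    have := hstab o
    rw [Nat.cast_eq_zero.1 h0] at this
    have := Nat.card_pos (α := H)
    omega
  push_cast
  rw [mul_pow]
  field_simp

end Count

/-! ### Numerical consequences for the sizes of the double cosets -/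

lemma dcFactor_nonneg (k : ℕ) : 0 ≤ dcFactor k := by
  unfold dcFactor; positivity

lemma dcFactor_one : dcFactor 1 = 1 := by simp [dcFactor]

lemma dcFactor_le_one (k : ℕ) : dcFactor k ≤ 1 := by
  rcases Nat.eq_zero_or_pos k with rfl | hk
  · simp [dcFactor]
  · unfold dcFactor
    rw [div_le_one (by positivity)]
    exact_mod_cast Nat.factorial_le_pow k

lemma factorial_sq_two_pow_le {k : ℕ} (hk : 2 ≤ k) : k.factorial ^ 2 * 2 ^ k ≤ (k ^ k) ^ 2 := by
  induction k, hk using Nat.le_induction with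
  | base => decide
  | succ n hn ih =>
    have h1 : 2 * (n ^ n) ^ 2 ≤ ((n + 1) ^ n) ^ 2 := by
      -- Bernoulli: `(n + 1) ^ n ≥ n ^ n + n * n ^ (n - 1) = 2 * n ^ n`
      have h2 : 2 * n ^ n ≤ (n + 1) ^ n := by
        have hb := one_add_mul_le_pow (a := (1 / n : ℚ)) (by
          have : (0 : ℚ) ≤ 1 / n := by positivity
          linarith) n
        have hn0 : (n : ℚ) ≠ 0 := by positivity
        have e1 : (1 + (n : ℚ) * (1 / n)) = 2 := by field_simp; norm_num
        have e2 : (1 + 1 / (n : ℚ)) ^ n = (n + 1) ^ n / n ^ n := by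
          rw [← div_pow]; congr 1; field_simp
        rw [e1, e2, le_div_iff₀ (by positivity)] at hb
        exact_mod_cast hb
      calc 2 * (n ^ n) ^ 2 ≤ (2 * n ^ n) ^ 2 := by nlinarith [sq_nonneg (n ^ n)]
        _ ≤ _ := Nat.pow_le_pow_left h2 2
    calc (n + 1).factorial ^ 2 * 2 ^ (n + 1)
        = (n + 1) ^ 2 * 2 * (n.factorial ^ 2 * 2 ^ n) := by
          rw [Nat.factorial_succ]; ring
      _ ≤ (n + 1) ^ 2 * 2 * (n ^ n) ^ 2 := Nat.mul_le_mul_left _ ih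
      _ = (n + 1) ^ 2 * (2 * (n ^ n) ^ 2) := by ring
      _ ≤ (n + 1) ^ 2 * ((n + 1) ^ n) ^ 2 := Nat.mul_le_mul_left _ h1
      _ = ((n + 1) ^ (n + 1)) ^ 2 := by ring

/-- The contribution of a double coset of size `k` to the number of cosets not fixed by `H`. -/
def movedSize (k : ℕ) : ℕ := if k = 1 then 0 else k

lemma dcFactor_sq_le (k : ℕ) (hk : 1 ≤ k) : dcFactor k ^ 2 ≤ (1 / 2 : ℚ) ^ movedSize k := by
  rcases hk.eq_or_lt with rfl | hk
  · simp [dcFactor, movedSize]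
  · have h := factorial_sq_two_pow_le hk
    rw [movedSize, if_neg (by omega), dcFactor, div_pow, one_div, inv_pow,
      div_le_iff₀ (by positivity), inv_mul_eq_div, le_div_iff₀ (by positivity)]
    exact_mod_cast h

section Numeric

variable {ι : Type*} [Fintype ι] (k : ι → ℕ)

lemma sum_moved_le_eight (hk : ∀ i, 1 ≤ k i) (h : (4 / 81 : ℚ) < ∏ i, dcFactor (k i)) :
    ∑ i, movedSize (k i) ≤ 8 := by
  by_contra! hc
  have h1 : (∏ i, dcFactor (k i)) ^ 2 ≤ (1 / 2 : ℚ) ^ ∑ i, movedSize (k i) := by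
    rw [← Finset.prod_pow, ← Finset.prod_pow_eq_pow_sum]
    exact Finset.prod_le_prod (fun i _ => by positivity) (fun i _ => dcFactor_sq_le _ (hk i))
  have h2 : (1 / 2 : ℚ) ^ ∑ i, movedSize (k i) ≤ (1 / 2 : ℚ) ^ 9 :=
    pow_le_pow_of_le_one (by norm_num) (by norm_num) hc
  nlinarith

/-- A factor `k! / k ^ k` with `k ≥ 5` odd is below `4 / 81 = (3! / 3 ^ 3) ^ 2`, so all parts are
`1` or `3` and at most one of them is `3`. -/
lemma sum_moved_odd (hk : ∀ i, Odd (k i)) (h : (4 / 81 : ℚ) < ∏ i, dcFactor (k i)) :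
    (∑ i, movedSize (k i) = 0) ∨ ∑ i, movedSize (k i) = 3 := by
  have h8 := sum_moved_le_eight k (fun i => (hk i).pos) h
  have h13 : ∀ i, k i = 1 ∨ k i = 3 := by
    intro i
    have h1 : ∏ i, dcFactor (k i) ≤ dcFactor (k i) := by
      rw [← Finset.mul_prod_erase _ _ (Finset.mem_univ i)]
      exact mul_le_of_le_one_right (dcFactor_nonneg _)
        (Finset.prod_le_one (fun _ _ => dcFactor_nonneg _) (fun _ _ => dcFactor_le_one _))
    have h2 : movedSize (k i) ≤ 8 :=
      (Finset.single_le_sum (f := fun i => movedSize (k i)) (fun _ _ => Nat.zero_le _)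
        (Finset.mem_univ i)).trans h8
    have h3 := lt_of_lt_of_le h h1
    have h4 := hk i
    generalize k i = n at *
    have h5 : n ≤ 8 := by
      unfold movedSize at h2; split_ifs at h2 <;> omega
    interval_cases n <;> simp_all [dcFactor, Nat.factorial, Nat.odd_iff] <;> norm_num at h3
  have hs : ∑ i, movedSize (k i) = 3 * (Finset.univ.filter fun i => k i = 3).card := by
    rw [Finset.card_filter, Finset.mul_sum]
    refine Finset.sum_congr rfl fun i _ => ?_
    rcases h13 i with h | h <;> simp [movedSize, h]
  have hp : ∏ i, dcFactor (k i) = (2 / 9 : ℚ) ^ (Finset.univ.filter fun i => k i = 3).card := by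
    rw [← Finset.prod_const, Finset.prod_filter]
    refine Finset.prod_congr rfl fun i _ => ?_
    rcases h13 i with h | h <;> simp [dcFactor, Nat.factorial, h]
    norm_num
  rw [hp] at h
  have : (Finset.univ.filter fun i => k i = 3).card ≤ 1 := by
    by_contra! hc
    have := pow_le_pow_of_le_one (a := (2 / 9 : ℚ)) (by norm_num) (by norm_num) hc
    norm_num at this h
    linarith
  omega

end Numeric

section Moved

variable {G : Type*} [Group G] [Finite G] (H : Subgroup G)

/-- The cosets fixed by `H` are those contained in the normalizer of `H`. -/
lemma sum_moved_eq [Fintype (Quotient (MulAction.orbitRel H (G ⧸ H)))] :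
    ∑ o, movedSize (dcSize H o) + H.relIndex (Subgroup.normalizer (H : Set G)) = H.index := by
  have : Fintype (G ⧸ H) := Fintype.ofFinite _
  have hfix : H.relIndex (Subgroup.normalizer (H : Set G)) =
      Nat.card (MulAction.fixedPoints H (G ⧸ H)) :=
    (Nat.card_congr (Sylow.fixedPointsMulLeftCosetsEquivQuotient H)).symm
  have hiff : ∀ x : G ⧸ H, x ∈ MulAction.fixedPoints H (G ⧸ H) ↔
      dcSize H (Quotient.mk _ x) = 1 := by
    intro x
    rw [dcSize_mk, Nat.card_eq_fintype_card]
    exact MulAction.mem_fixedPoints_iff_card_orbit_eq_one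
  have h1 : ∑ o, movedSize (dcSize H o) =
      (Finset.univ.filter fun x : G ⧸ H => x ∉ MulAction.fixedPoints H (G ⧸ H)).card := by
    rw [Finset.card_eq_sum_card_fiberwise (t := Finset.univ)
      (f := fun x => (Quotient.mk (MulAction.orbitRel H (G ⧸ H)) x)) (fun _ _ => by simp)]
    refine Finset.sum_congr rfl fun o _ => ?_
    rw [movedSize, Finset.filter_filter]
    split_ifs with ho
    · symm
      rw [Finset.card_eq_zero, Finset.filter_eq_empty_iff]
      rintro x - ⟨hx, rfl⟩
      exact hx ((hiff x).2 ho)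
    · rw [dcSize, Nat.card_eq_fintype_card, Fintype.card_subtype]
      congr 1
      ext x
      simp only [Finset.mem_filter, Finset.mem_univ, true_and]
      refine ⟨fun hx => ⟨?_, hx⟩, fun hx => hx.2⟩
      rw [hiff, hx]
      exact ho
  have h2 : Nat.card (MulAction.fixedPoints H (G ⧸ H)) =
      (Finset.univ.filter fun x : G ⧸ H => x ∈ MulAction.fixedPoints H (G ⧸ H)).card := by
    rw [← Fintype.card_subtype, Nat.card_eq_fintype_card]
  rw [hfix, h1, h2, add_comm, Finset.card_filter_add_card_filter_not, Subgroup.index,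
    Nat.card_eq_fintype_card, Finset.card_univ]

lemma tp_le_transProb : tp G ≤ transProb H H := by
  unfold tp
  exact Finset.inf'_le _ (@Finset.mem_univ _ (_) H)

/-- At most eight cosets are moved by `H`, while the `|N(H) : H|` fixed ones are at most half of
all. -/
lemma index_le_sixteen (h : tp G > (4 / 81 : ℚ)) (hH : ¬ H.Normal) : H.index ≤ 16 := by
  have : Fintype (Quotient (MulAction.orbitRel H (G ⧸ H))) := Fintype.ofFinite _
  have h1 := (h.trans_le (tp_le_transProb H)).trans_le (transProb_le H)
  have h2 := sum_moved_le_eight _ (fun o => by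
    obtain ⟨x, rfl⟩ := Quotient.exists_rep o
    rw [dcSize_mk]
    have := (MulAction.nonempty_orbit (M := H) x).to_subtype
    exact Nat.card_pos) h1
  have h3 := sum_moved_eq H
  have h4 := Subgroup.relIndex_mul_index (Subgroup.le_normalizer (H := H))
  have h5 : (Subgroup.normalizer (H : Set G)).index ≠ 1 := by
    rwa [Ne, Subgroup.index_eq_one, Subgroup.normalizer_eq_top_iff]
  have h6 : (Subgroup.normalizer (H : Set G)).index ≠ 0 := Subgroup.index_ne_zero_of_finite
  have h7 : 2 ≤ (Subgroup.normalizer (H : Set G)).index := by omega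
  have h8 := Nat.mul_le_mul_left (H.relIndex (Subgroup.normalizer (H : Set G))) h7
  omega

/-- Exactly three cosets are moved by `H`, that is `|N(H) : H| (|G : N(H)| - 1) = 3`. -/
lemma odd_cases (h : tp G > (4 / 81 : ℚ)) (hH : ¬ H.Normal) (hodd : Odd (Nat.card H)) :
    (H.index = 4 ∧ Subgroup.normalizer (H : Set G) = H) ∨
    ((Subgroup.normalizer (H : Set G)).index = 2 ∧
      H.relIndex (Subgroup.normalizer (H : Set G)) = 3) := by
  have : Fintype (Quotient (MulAction.orbitRel H (G ⧸ H))) := Fintype.ofFinite _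
  have h1 := (h.trans_le (tp_le_transProb H)).trans_le (transProb_le H)
  have h2 := sum_moved_odd _ (fun o => by
    obtain ⟨x, rfl⟩ := Quotient.exists_rep o
    rw [dcSize_mk]
    exact Odd.of_dvd_nat hodd (Dvd.intro _ (card_orbit_mul H x))) h1
  have h3 := sum_moved_eq H
  have h4 := Subgroup.relIndex_mul_index (Subgroup.le_normalizer (H := H))
  have h5 : (Subgroup.normalizer (H : Set G)).index ≠ 1 := by
    rwa [Ne, Subgroup.index_eq_one, Subgroup.normalizer_eq_top_iff]
  have h6 : (Subgroup.normalizer (H : Set G)).index ≠ 0 := Subgroup.index_ne_zero_of_finite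
  obtain ⟨j, hj⟩ : ∃ j, (Subgroup.normalizer (H : Set G)).index = j + 2 := ⟨_, by
    rw [Nat.sub_add_cancel]; omega⟩
  have h9 : H.relIndex (Subgroup.normalizer (H : Set G)) ≠ 0 :=
    Subgroup.index_ne_zero_of_finite
  have h10 : H.relIndex (Subgroup.normalizer (H : Set G)) * (j + 1) =
      ∑ o, movedSize (dcSize H o) := by
    rw [hj] at h4
    have : H.relIndex (Subgroup.normalizer (H : Set G)) * (j + 2) =
      H.relIndex (Subgroup.normalizer (H : Set G)) * (j + 1) +
      H.relIndex (Subgroup.normalizer (H : Set G)) := by ring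
    omega
  rcases h2 with h2 | h2
  · rw [h2] at h10
    simp at h10
    omega
  · rw [h2] at h10
    rcases (Nat.dvd_prime Nat.prime_three).1 (Dvd.intro _ h10) with h11 | h11
    · left
      refine ⟨by omega, le_antisymm (Subgroup.relIndex_eq_one.1 h11) Subgroup.le_normalizer⟩
    · right
      rw [h11] at h10
      exact ⟨by omega, h11⟩

end Moved

/-! ### Commutator subgroups and cyclic subgroups -/

open scoped commutatorElement

/-- The automorphism group of a cyclic group is abelian, so `G'` centralizes every cyclic normal
subgroup. -/
lemma commutator_le_centralizer {G : Type*} [Group G] {x : G} (hx : (Subgroup.zpowers x).Normal) :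
    commutator G ≤ Subgroup.centralizer {x} := by
  have hconj : ∀ g : G, ∃ n : ℤ, g * x * g⁻¹ = x ^ n := fun g => by
    obtain ⟨n, hn⟩ := hx.conj_mem x (Subgroup.mem_zpowers x) g
    exact ⟨n, hn.symm⟩
  have key : ∀ (g k : G), (g * k) * x * (g * k)⁻¹ = (k * g) * x * (k * g)⁻¹ := by
    intro g k
    obtain ⟨m, hm⟩ := hconj g
    obtain ⟨n, hn⟩ := hconj k
    have e1 : (g * k) * x * (g * k)⁻¹ = g * (k * x * k⁻¹) * g⁻¹ := by group
    have e2 : (k * g) * x * (k * g)⁻¹ = k * (g * x * g⁻¹) * k⁻¹ := by group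
    rw [e1, e2, hm, hn, ← conj_zpow, ← conj_zpow, hm, hn, ← zpow_mul, ← zpow_mul, mul_comm]
  rw [commutator_def, Subgroup.commutator_le]
  intro g _ k _
  rw [Subgroup.mem_centralizer_singleton_iff]
  have h := key (g⁻¹) (k⁻¹)
  have h2 : ⁅g, k⁆ * x * ⁅g, k⁆⁻¹ = x := by
    have e : ⁅g, k⁆ * x * ⁅g, k⁆⁻¹ = (g * k) * ((g⁻¹ * k⁻¹) * x * (g⁻¹ * k⁻¹)⁻¹) * (g * k)⁻¹ := by
      rw [commutatorElement_def]; group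
    rw [e, h]; group
  exact mul_inv_eq_iff_eq_mul.1 h2

section IndexTwo

variable {Q : Type*} [Group Q] {A : Subgroup Q}

/-- For `A` abelian of index two and `g` in `Q`, the endomorphism `a ↦ a⁻¹ (g a g⁻¹)` of `A`. -/
def twist (hA2 : A.index = 2) (hA : ∀ a ∈ A, ∀ b ∈ A, a * b = b * a) (g : Q) : A →* A where
  toFun a := ⟨(a : Q)⁻¹ * (g * a * g⁻¹), A.mul_mem (A.inv_mem a.2)
    ((Subgroup.normal_of_index_eq_two hA2).conj_mem a a.2 g)⟩
  map_one' := by ext; simp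
  map_mul' a b := by
    ext
    simp only [Subgroup.coe_mul, mul_inv_rev]
    have h1 := hA _ (A.inv_mem b.2) _
      (A.mul_mem (A.inv_mem a.2) ((Subgroup.normal_of_index_eq_two hA2).conj_mem a a.2 g))
    calc (b : Q)⁻¹ * (a : Q)⁻¹ * (g * (a * b) * g⁻¹)
        = ((b : Q)⁻¹ * ((a : Q)⁻¹ * (g * a * g⁻¹))) * (g * b * g⁻¹) := by group
      _ = _ := by rw [h1]; group

variable (hA2 : A.index = 2) (hA : ∀ a ∈ A, ∀ b ∈ A, a * b = b * a) {g : Q}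

lemma commutator_le_range_twist (hg : g ∉ A) :
    commutator Q ≤ (twist hA2 hA g).range.map A.subtype := by
  have hn := Subgroup.normal_of_index_eq_two hA2
  have hdec : ∀ p : Q, p ∉ A → ∃ a ∈ A, p = a * g := fun p hp =>
    ⟨p * g⁻¹, (Subgroup.mul_mem_iff_of_index_two hA2).2 (by simp [hp, hg]), by simp⟩
  have hmem : ∀ a ∈ A, a⁻¹ * (g * a * g⁻¹) ∈ (twist hA2 hA g).range.map A.subtype :=
    fun a ha => ⟨twist hA2 hA g ⟨a, ha⟩, ⟨⟨a, ha⟩, rfl⟩, rfl⟩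
  rw [commutator_def, Subgroup.commutator_le]
  intro p _ q _
  rw [commutatorElement_def]
  by_cases hp : p ∈ A <;> by_cases hq : q ∈ A
  · rw [hA p hp q hq]; simp
  · obtain ⟨b, hb, rfl⟩ := hdec q hq
    have h1 := hmem p⁻¹ (A.inv_mem hp)
    have h2 := hA b hb _ (hn.conj_mem _ (A.inv_mem hp) g)
    convert h1 using 1
    calc p * (b * g) * p⁻¹ * (b * g)⁻¹ = p * (b * (g * p⁻¹ * g⁻¹)) * b⁻¹ := by group
      _ = _ := by rw [h2]; group
  · obtain ⟨a, ha, rfl⟩ := hdec p hp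
    have h1 := hmem q hq
    have h2 := hA a ha _ (hn.conj_mem _ hq g)
    have h3 := hA _ (A.inv_mem hq) _ (hn.conj_mem _ hq g)
    convert h1 using 1
    rw [h3]
    calc a * g * q * (a * g)⁻¹ * q⁻¹ = (a * (g * q * g⁻¹)) * a⁻¹ * q⁻¹ := by group
      _ = _ := by rw [h2]; group
  · obtain ⟨a, ha, rfl⟩ := hdec p hp
    obtain ⟨b, hb, rfl⟩ := hdec q hq
    have hba := A.mul_mem hb (A.inv_mem ha)
    have h1 := hmem _ hba
    have h2 := hA a ha _ (hn.conj_mem _ hba g)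
    have h3 := hA _ (A.mul_mem ha (A.inv_mem hb)) _ (hn.conj_mem _ hba g)
    have h4 := hA a ha _ (A.inv_mem hb)
    convert h1 using 1
    calc a * g * (b * g) * (a * g)⁻¹ * (b * g)⁻¹
        = (a * (g * (b * a⁻¹) * g⁻¹)) * b⁻¹ := by group
      _ = (g * (b * a⁻¹) * g⁻¹) * (a * b⁻¹) := by rw [h2]; group
      _ = (a * b⁻¹) * (g * (b * a⁻¹) * g⁻¹) := h3.symm
      _ = _ := by group

/-- Since `g²` commutes with `A`, conjugation by `g` inverts `a⁻¹ (g a g⁻¹)`. -/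
lemma conj_range_twist {r : A} (hr : r ∈ (twist hA2 hA g).range) :
    g * (r : Q) * g⁻¹ = (r : Q)⁻¹ := by
  obtain ⟨a, rfl⟩ := hr
  have hn := Subgroup.normal_of_index_eq_two hA2
  have h1 := hA _ (Subgroup.sq_mem_of_index_two hA2 g) a a.2
  have h2 : g * (g * (a : Q) * g⁻¹) * g⁻¹ = a := by
    calc g * (g * (a : Q) * g⁻¹) * g⁻¹ = (g ^ 2 * a) * (g ^ 2)⁻¹ := by rw [pow_two]; group
      _ = a := by rw [h1]; group
  have h3 : (twist hA2 hA g a : Q) = (a : Q)⁻¹ * (g * a * g⁻¹) := rfl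
  rw [h3, mul_inv_rev, inv_inv]
  calc g * ((a : Q)⁻¹ * (g * a * g⁻¹)) * g⁻¹
      = (g * a * g⁻¹)⁻¹ * (g * (g * (a : Q) * g⁻¹) * g⁻¹) := by group
    _ = _ := by rw [h2]

/-- If `Q` has an abelian subgroup of index two, then the cyclic subgroups of `Q'` are normal. -/
lemma zpowers_normal_of_index_two (hA2 : A.index = 2)
    (hA : ∀ a ∈ A, ∀ b ∈ A, a * b = b * a) {e : Q} (he : e ∈ commutator Q) :
    (Subgroup.zpowers e).Normal := by
  obtain ⟨g, hg⟩ : ∃ g, g ∉ A := by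
    by_contra! hall
    have : A = ⊤ := (Subgroup.eq_top_iff' A).2 hall
    rw [this, Subgroup.index_top] at hA2
    omega
  obtain ⟨r, hr, rfl⟩ := commutator_le_range_twist hA2 hA hg he
  refine ⟨?_⟩
  rintro _ ⟨n, rfl⟩ p
  change p * (r : Q) ^ n * p⁻¹ ∈ Subgroup.zpowers (r : Q)
  rw [← conj_zpow]
  refine Subgroup.zpow_mem _ ?_ n
  by_cases hp : p ∈ A
  · rw [hA p hp r r.2]; simp
  · have ha : p * g⁻¹ ∈ A := (Subgroup.mul_mem_iff_of_index_two hA2).2 (by simp [hp, hg])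
    have h1 := conj_range_twist hA2 hA hr
    have : p * (r : Q) * p⁻¹ = (p * g⁻¹) * (g * r * g⁻¹) * (p * g⁻¹)⁻¹ := by group
    rw [this, h1, hA _ ha _ (A.inv_mem r.2), mul_inv_cancel_right]
    exact Subgroup.inv_mem _ (Subgroup.mem_zpowers _)

end IndexTwo

/-- The same conclusion when `N` is only abelian modulo a subgroup of the given cyclic subgroup. -/
lemma zpowers_normal_of_index_two' {G : Type*} [Group G] {N : Subgroup G} (hN : N.index = 2)
    {x : G} (hx : x ∈ commutator G) (hNx : ⁅N, N⁆ ≤ Subgroup.zpowers x) :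
    (Subgroup.zpowers x).Normal := by
  have hn := Subgroup.normal_of_index_eq_two hN
  let f := QuotientGroup.mk' ⁅N, N⁆
  have hker : f.ker = ⁅N, N⁆ := QuotientGroup.ker_mk' _
  have hidx : (N.map f).index = 2 := by
    rw [← hN]
    refine Subgroup.index_map_eq _ (QuotientGroup.mk'_surjective _) ?_
    rw [hker]
    exact Subgroup.commutator_le_left N N
  have hcomm : ∀ a ∈ N.map f, ∀ b ∈ N.map f, a * b = b * a := by
    rintro _ ⟨a, ha, rfl⟩ _ ⟨b, hb, rfl⟩
    have h1 : f ⁅a, b⁆ = 1 := by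
      rw [← MonoidHom.mem_ker, hker]
      exact Subgroup.commutator_mem_commutator ha hb
    rwa [map_commutatorElement, commutatorElement_eq_one_iff_mul_comm] at h1
  have hfx : f x ∈ commutator (G ⧸ ⁅N, N⁆) := by
    have := Subgroup.mem_map_of_mem f hx
    rw [commutator_def, Subgroup.map_commutator] at this
    exact Subgroup.commutator_mono le_top le_top this
  have h2 := zpowers_normal_of_index_two hidx hcomm hfx
  have h3 : Subgroup.zpowers x = (Subgroup.zpowers (f x)).comap f := by
    rw [← MonoidHom.map_zpowers, Subgroup.comap_map_eq, hker, sup_eq_left.2 hNx]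
  rw [h3]
  exact h2.comap f

/-! ### Small 2-groups -/

/-- Take `u` noncentral but central modulo `Z = Z(Q)`, and `C = C_Q(u)`. If `|Q : Z| ≤ 4`, then
`Z(C) ⊇ ⟨Z, u⟩` has index two. Otherwise `|Q| = 16` and `|Z| = 2`; then `|Q : C| = 2` because the
commutators `[q, u]` lie in `Z`, and `C`, of order eight with centre of order at least four, is
abelian. -/
lemma exists_abelian_index_two {Q : Type*} [Group Q] [Finite Q] (hp : IsPGroup 2 Q)
    (hc : Nat.card Q ≤ 16) (hna : ¬ ∀ a b : Q, a * b = b * a) :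
    ∃ A : Subgroup Q, A.index = 2 ∧ ∀ a ∈ A, ∀ b ∈ A, a * b = b * a := by
  have : Fact (Nat.Prime 2) := ⟨Nat.prime_two⟩
  set Z := Subgroup.center Q with hZ
  have hZtop : Z ≠ ⊤ := fun h => hna fun a b => by
    have ha : b ∈ Z := h ▸ Subgroup.mem_top b
    exact Subgroup.mem_center_iff.1 ha a
  have hQnt : Nontrivial Q := by
    by_contra hn
    rw [not_nontrivial_iff_subsingleton] at hn
    exact hna fun a b => Subsingleton.elim _ _
  have hqnt : Nontrivial (Q ⧸ Z) := QuotientGroup.nontrivial_iff.2 hZtop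
  have hcn := (hp.to_quotient Z).center_nontrivial
  obtain ⟨⟨v, hv⟩, hv1⟩ := exists_ne (1 : Subgroup.center (Q ⧸ Z))
  obtain ⟨u, rfl⟩ := QuotientGroup.mk_surjective v
  have huZ : u ∉ Z := fun hu => hv1 (Subtype.ext ((QuotientGroup.eq_one_iff u).2 hu))
  have hcomm : ∀ q : Q, q * u * q⁻¹ * u⁻¹ ∈ Z := by
    intro q
    rw [← QuotientGroup.eq_one_iff]
    have := Subgroup.mem_center_iff.1 hv (q : Q ⧸ Z)
    change (q : Q ⧸ Z) * (u : Q ⧸ Z) * (q : Q ⧸ Z)⁻¹ * (u : Q ⧸ Z)⁻¹ = 1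
    rw [this]; simp
  let C : Subgroup Q := Subgroup.centralizer {u}
  have hCmem : ∀ {a}, a ∈ C ↔ a * u = u * a := fun {a} => Subgroup.mem_centralizer_singleton_iff
  -- the centre of the centralizer of `u` is abelian and properly contains the centre of `Q`
  let B : Subgroup Q := (Subgroup.center C).map C.subtype
  have hBcard : Nat.card B = Nat.card (Subgroup.center C) :=
    Subgroup.card_map_of_injective C.subtype_injective
  have hBcomm : ∀ a ∈ B, ∀ b ∈ B, a * b = b * a := by
    rintro _ ⟨a, ha, rfl⟩ _ ⟨b, hb, rfl⟩
    have := Subgroup.mem_center_iff.1 hb a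
    exact congrArg Subtype.val this
  have hZB : Z ≤ B := by
    intro z hz
    have hz' := Subgroup.mem_center_iff.1 hz
    refine ⟨⟨z, hCmem.2 (hz' u).symm⟩, Subgroup.mem_center_iff.2 fun a => Subtype.ext (hz' a), rfl⟩
  have huB : u ∈ B := by
    refine ⟨⟨u, hCmem.2 rfl⟩, Subgroup.mem_center_iff.2 fun a => Subtype.ext ?_, rfl⟩
    exact hCmem.1 a.2
  have hZpos : 0 < Nat.card Z := Nat.card_pos
  have hZB2 : 2 * Nat.card Z ≤ Nat.card B := by
    obtain ⟨d, hd⟩ := Subgroup.card_dvd_of_le hZB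
    rw [hd, mul_comm]
    refine Nat.mul_le_mul_left _ ?_
    by_contra! hlt
    have hB0 : 0 < Nat.card B := Nat.card_pos
    interval_cases d
    · omega
    · exact huZ ((Subgroup.eq_of_le_of_card_ge hZB (by omega)) ▸ huB)
  have hidx1 : ∀ A : Subgroup Q, (∀ a ∈ A, ∀ b ∈ A, a * b = b * a) → A.index ≠ 1 := by
    intro A hA h1
    rw [Subgroup.index_eq_one] at h1
    exact hna fun a b => hA a (h1 ▸ Subgroup.mem_top a) b (h1 ▸ Subgroup.mem_top b)
  have hBmul := B.card_mul_index
  have hB0 : B.index ≠ 0 := Subgroup.index_ne_zero_of_finite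
  have hB1 := hidx1 B hBcomm
  by_cases hbig : Nat.card Q ≤ 4 * Nat.card Z
  · refine ⟨B, ?_, hBcomm⟩
    have : B.index ≤ 2 := by
      by_contra! h3
      have := Nat.mul_le_mul hZB2 h3
      omega
    omega
  · have hnt : Nontrivial Z := hp.center_nontrivial
    have hZ1 : 1 < Nat.card Z := Finite.one_lt_card
    obtain ⟨n, hn⟩ := IsPGroup.iff_card.1 hp
    obtain ⟨m, hm⟩ := IsPGroup.iff_card.1 (hp.to_subgroup Z)
    have hn4 : n = 4 := by
      rw [hn] at hc hbig
      have : n < 5 := by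
        by_contra! h5
        have := Nat.pow_le_pow_right (n := 2) (by norm_num) h5
        omega
      interval_cases n <;> omega
    have hm1 : Nat.card Z = 2 := by
      rw [hm, hn, hn4] at hbig
      rw [hm] at hZ1 ⊢
      have : m < 2 := by
        by_contra! h5
        have := Nat.pow_le_pow_right (n := 2) (by norm_num) h5
        omega
      interval_cases m <;> omega
    have hCle : C.index ≤ 2 := by
      rw [← hm1]
      refine Nat.card_le_card_of_injective
        (fun x : Q ⧸ C => (⟨x.out * u * x.out⁻¹ * u⁻¹, hcomm _⟩ : Z)) ?_
      intro x y hxy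
      have h1 : x.out * u * x.out⁻¹ = y.out * u * y.out⁻¹ :=
        mul_right_cancel (congrArg Subtype.val hxy)
      rw [← QuotientGroup.out_eq' x, ← QuotientGroup.out_eq' y, QuotientGroup.eq]
      refine hCmem.2 ?_
      have h2 : u * x.out⁻¹ * y.out = x.out⁻¹ * y.out * u := by
        have := congrArg (fun w => x.out⁻¹ * w * y.out) h1
        simpa [mul_assoc] using this
      rw [← h2, mul_assoc]
    have hC1 : C.index ≠ 1 := by
      intro h1
      rw [Subgroup.index_eq_one] at h1
      refine huZ (Subgroup.mem_center_iff.2 fun a => ?_)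
      exact hCmem.1 (h1 ▸ Subgroup.mem_top a)
    have hC0 : C.index ≠ 0 := Subgroup.index_ne_zero_of_finite
    have hC2 : C.index = 2 := by omega
    have hC8 : Nat.card C = 8 := by
      have := C.card_mul_index
      rw [hC2, hn, hn4] at this
      omega
    refine ⟨C, hC2, ?_⟩
    have hz := (Subgroup.center C).card_mul_index
    rw [hC8, ← hBcard] at hz
    have hzle : (Subgroup.center C).index ≤ 2 := by
      by_contra! h3
      have h4 := Nat.mul_le_mul hZB2 h3
      omega
    have hz0 : (Subgroup.center C).index ≠ 0 := Subgroup.index_ne_zero_of_finite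
    have hcyc : IsCyclic (C ⧸ Subgroup.center C) := by
      have hcard : Nat.card (C ⧸ Subgroup.center C) = (Subgroup.center C).index := rfl
      by_cases h2 : (Subgroup.center C).index = 2
      · exact isCyclic_of_prime_card (p := 2) (hcard.trans h2)
      · have : Subsingleton (C ⧸ Subgroup.center C) :=
          (Nat.card_eq_one_iff_unique.1 (hcard.trans (by omega))).1
        infer_instance
    have := isMulCommutative_of_isCyclic_quotient_center_self C
    intro a ha b hb
    exact congrArg Subtype.val (mul_comm' (⟨a, ha⟩ : C) ⟨b, hb⟩)

/-- With `A` abelian of index two and `g ∉ A`, the group `Q'` embeds in the range `R` of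
`a ↦ [a, g]`, and `|R| |C_A(g)| = |A| ≤ 8`. If `R` has exponent two then `R ≤ C_A(g)`, so
`|R| ≤ 2`; otherwise `|R| ≤ 4` and `R` has an element whose order exceeds two. -/
lemma commutator_isCyclic {Q : Type*} [Group Q] [Finite Q] (hp : IsPGroup 2 Q)
    (hc : Nat.card Q ≤ 16) : IsCyclic (commutator Q) := by
  by_cases hna : ∀ a b : Q, a * b = b * a
  · have : commutator Q = ⊥ := by
      rw [eq_bot_iff, commutator_def, Subgroup.commutator_le]
      intro a _ b _
      rw [Subgroup.mem_bot, commutatorElement_eq_one_iff_mul_comm]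
      exact hna a b
    rw [this]
    infer_instance
  obtain ⟨A, hA2, hA⟩ := exists_abelian_index_two hp hc hna
  obtain ⟨g, hg⟩ : ∃ g, g ∉ A := by
    by_contra! hall
    have : A = ⊤ := (Subgroup.eq_top_iff' A).2 hall
    rw [this, Subgroup.index_top] at hA2
    omega
  set φ := twist hA2 hA g with hφ
  have hle := commutator_le_range_twist hA2 hA hg
  have hφker : ∀ a : A, a ∈ φ.ker ↔ g * (a : Q) * g⁻¹ = a := by
    intro a
    rw [MonoidHom.mem_ker, Subtype.ext_iff]
    change (a : Q)⁻¹ * (g * a * g⁻¹) = 1 ↔ _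
    rw [inv_mul_eq_one, eq_comm]
  have hcardA : Nat.card A ≤ 8 := by
    have := A.card_mul_index
    rw [hA2] at this
    omega
  have hmul : Nat.card φ.range * Nat.card φ.ker = Nat.card A := by
    rw [← Subgroup.index_ker, mul_comm, Subgroup.card_mul_index]
  have hinv : ∀ r : A, r ^ 2 = 1 → (r : Q)⁻¹ = r := by
    intro r hr
    rw [inv_eq_iff_mul_eq_one, ← pow_two]
    exact congrArg Subtype.val hr
  suffices hR : IsCyclic φ.range by
    have h1 : IsCyclic (φ.range.map A.subtype) :=
      isCyclic_of_surjective _ (A.subtype.subgroupMap_surjective φ.range)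
    exact isCyclic_of_injective (Subgroup.inclusion hle) (Subgroup.inclusion_injective hle)
  have hRpos : 0 < Nat.card φ.range := Nat.card_pos
  have hKpos : 0 < Nat.card φ.ker := Nat.card_pos
  by_cases hexp : ∀ r ∈ φ.range, r ^ 2 = 1
  · have hRK : φ.range ≤ φ.ker := by
      intro r hr
      rw [hφker, conj_range_twist hA2 hA hr]
      exact hinv r (hexp r hr)
    have h1 := Subgroup.card_le_of_le hRK
    have h2 : Nat.card φ.range ≤ 2 := by
      by_contra! h3
      have := Nat.mul_le_mul h3 (h3.trans_le h1)
      omega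
    by_cases h3 : Nat.card φ.range = 2
    · have : Fact (Nat.Prime 2) := ⟨Nat.prime_two⟩
      exact isCyclic_of_prime_card h3
    · have : Subsingleton φ.range := (Nat.card_eq_one_iff_unique.1 (by omega)).1
      infer_instance
  · push Not at hexp
    obtain ⟨r, hr, hr2⟩ := hexp
    have hK : Nat.card φ.ker ≠ 1 := by
      intro hK1
      have hbot : φ.ker = ⊥ := Subgroup.card_eq_one.1 hK1
      have hRA : φ.range = ⊤ :=
        Subgroup.eq_top_of_card_eq _ (by rw [← hmul, hK1, mul_one])
      have hAnt : Nontrivial A := ⟨r, 1, fun h => hr2 (by rw [h, one_pow])⟩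
      have : Fact (Nat.Prime 2) := ⟨Nat.prime_two⟩
      obtain ⟨n, hn0, hn⟩ := (IsPGroup.nontrivial_iff_card (hp.to_subgroup A)).1 hAnt
      obtain ⟨a, ha⟩ := exists_prime_orderOf_dvd_card' (G := A) 2
        (hn ▸ dvd_pow_self 2 hn0.ne')
      have ha2 : a ^ 2 = 1 := ha ▸ pow_orderOf_eq_one a
      have : a ∈ φ.ker := by
        rw [hφker, conj_range_twist hA2 hA (g := g) (hRA ▸ Subgroup.mem_top a)]
        exact hinv a ha2
      rw [hbot, Subgroup.mem_bot] at this
      rw [this, orderOf_one] at ha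
      omega
    have hR4 : Nat.card φ.range ≤ 4 := by
      by_contra! h5
      have := Nat.mul_le_mul h5 (show 2 ≤ Nat.card φ.ker by omega)
      omega
    set s : φ.range := ⟨r, hr⟩
    have hs2 : s ^ 2 ≠ 1 := fun h => hr2 (congrArg Subtype.val h)
    have hdvd : orderOf s ∣ Nat.card φ.range := orderOf_dvd_natCard s
    have h3 : ¬ orderOf s ∣ 2 := fun h => hs2 (orderOf_dvd_iff_pow_eq_one.1 h)
    refine isCyclic_of_orderOf_eq_card s ?_
    generalize orderOf s = d at *
    generalize Nat.card φ.range = N at *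
    have hd : d ≤ N := Nat.le_of_dvd hRpos hdvd
    interval_cases N <;> interval_cases d <;> omega

/-! ### Reduction to a 2-group and conclusion -/

lemma not_dvd_index_of_forall {K : Type*} [Group K] [Finite K] (L : Subgroup K) {q : ℕ}
    (hq : q.Prime) (h : ∀ (x : K) (n : ℕ), orderOf x = q ^ n → x ∈ L) : ¬ q ∣ L.index := by
  have : Fact q.Prime := ⟨hq⟩
  obtain ⟨P⟩ := Sylow.nonempty (p := q) (G := K)
  have hPL : (P : Subgroup K) ≤ L := by
    intro x hx
    obtain ⟨n, hn⟩ := IsPGroup.iff_orderOf.1 P.2 ⟨x, hx⟩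
    exact h x n (by rw [← hn, Subgroup.orderOf_mk])
  intro hd
  exact P.not_dvd_index (hd.trans (Subgroup.index_dvd_of_le hPL))

section Main

variable {G : Type*} [Group G] [Finite G]

/-- A self-normalizing cyclic Sylow subgroup of index four has a normal complement `V` of order
four by Burnside's transfer theorem, and `G' ≤ V` since `G / V` is cyclic. -/
lemma commutator_comm_of_index_four {q n : ℕ} (hq : q.Prime) (hq2 : q ≠ 2) {t : G}
    (ht : orderOf t = q ^ n) (hi : (Subgroup.zpowers t).index = 4)
    (hN : Subgroup.normalizer (Subgroup.zpowers t : Set G) = Subgroup.zpowers t) :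
    ∀ a b : G, a ∈ commutator G → b ∈ commutator G → a * b = b * a := by
  have : Fact q.Prime := ⟨hq⟩
  have hpg : IsPGroup q (Subgroup.zpowers t) :=
    IsPGroup.of_card (n := n) (by rw [Nat.card_zpowers, ht])
  have hnd : ¬ q ∣ (Subgroup.zpowers t).index := by
    rw [hi]
    intro hd
    have : q ∣ 2 ^ 2 := hd
    exact hq2 ((Nat.prime_dvd_prime_iff_eq hq Nat.prime_two).1 (hq.dvd_of_dvd_pow this))
  let P : Sylow q G := hpg.toSylow hnd
  have hP : (P : Subgroup G) = Subgroup.zpowers t := rfl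
  have hNC : Subgroup.normalizer ((P : Subgroup G) : Set G) ≤
      Subgroup.centralizer ((P : Subgroup G) : Set G) := by
    rw [hP, hN]
    intro a ha b hb
    obtain ⟨i, rfl⟩ := ha
    obtain ⟨j, rfl⟩ := hb
    change t ^ j * t ^ i = t ^ i * t ^ j
    rw [← zpow_add, ← zpow_add, add_comm]
  set f := MonoidHom.transferSylow P hNC
  have hcompl := MonoidHom.ker_transferSylow_isComplement' P hNC
  have hV : Nat.card f.ker = 4 := by
    rw [← hi, ← hP]
    exact hcompl.symm.card_right
  have hle : commutator G ≤ f.ker := by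
    rw [commutator_def, Subgroup.commutator_le]
    intro a _ b _
    rw [MonoidHom.mem_ker, map_commutatorElement, commutatorElement_eq_one_iff_mul_comm]
    obtain ⟨_, i, hi'⟩ := f a
    obtain ⟨_, j, hj⟩ := f b
    apply Subtype.ext
    subst hi' hj
    change t ^ i * t ^ j = t ^ j * t ^ i
    rw [← zpow_add, ← zpow_add, add_comm]
  have := IsPGroup.isMulCommutative_of_card_eq_prime_sq (p := 2) (G := f.ker) (by rw [hV]; rfl)
  intro a b ha hb
  exact congrArg Subtype.val (mul_comm' (⟨a, hle ha⟩ : f.ker) ⟨b, hle hb⟩)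

/-- If `G'` is not abelian, all cyclic subgroups of odd prime power order are normal. -/
lemma odd_zpowers_normal (h : tp G > (4 / 81 : ℚ))
    (hD : ¬ ∀ a b : G, a ∈ commutator G → b ∈ commutator G → a * b = b * a)
    {q n : ℕ} (hq : q.Prime) (hq2 : q ≠ 2) {t : G} (ht : orderOf t = q ^ n) :
    (Subgroup.zpowers t).Normal := by
  have key : ∀ {q n : ℕ} (_ : q.Prime) (_ : q ≠ 2) {t : G} (_ : orderOf t = q ^ n),
      ¬ (Subgroup.zpowers t).Normal →
      (Subgroup.normalizer (Subgroup.zpowers t : Set G)).index = 2 ∧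
      (Subgroup.zpowers t).relIndex (Subgroup.normalizer (Subgroup.zpowers t : Set G)) = 3 := by
    intro q n hq hq2 t ht hnn
    have hodd : Odd (Nat.card (Subgroup.zpowers t)) := by
      rw [Nat.card_zpowers, ht]
      exact (hq.odd_of_ne_two hq2).pow
    rcases odd_cases _ h hnn hodd with ⟨h1, h2⟩ | h1
    · exact absurd (commutator_comm_of_index_four hq hq2 ht h1 h2) hD
    · exact h1
  by_contra hnn
  obtain ⟨hi, hr⟩ := key hq hq2 ht hnn
  set N := Subgroup.normalizer (Subgroup.zpowers t : Set G) with hNdef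
  have hcomm_le : ∀ M : Subgroup G, M.index = 2 → commutator G ≤ M := by
    intro M hM
    rw [commutator_def, Subgroup.commutator_le]
    intro a _ b _
    rw [commutatorElement_def]
    simp only [Subgroup.mul_mem_iff_of_index_two hM, inv_mem_iff]
    tauto
  have hDN : commutator G ≤ N := hcomm_le N hi
  have hNodd : Odd (Nat.card N) := by
    rw [← Subgroup.relIndex_bot_left, ← Subgroup.relIndex_mul_relIndex ⊥ (Subgroup.zpowers t) N
      bot_le Subgroup.le_normalizer, hr, Subgroup.relIndex_bot_left, Nat.card_zpowers, ht]
    exact (hq.odd_of_ne_two hq2).pow.mul (by decide)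
  -- the elements of `G'` of odd prime power order generate normal subgroups of `G`
  have hDnormal : ∀ {q n : ℕ} (_ : q.Prime) (_ : q ≠ 2) {x : G} (_ : orderOf x = q ^ n),
      x ∈ commutator G → (Subgroup.zpowers x).Normal := by
    intro q n hq hq2 x hx hxD
    by_contra hnx
    obtain ⟨hi', hr'⟩ := key hq hq2 hx hnx
    refine hnx (zpowers_normal_of_index_two' hi' hxD ?_)
    set M := Subgroup.normalizer (Subgroup.zpowers x : Set G)
    have hnorm : ((Subgroup.zpowers x).subgroupOf M).Normal := Subgroup.normal_in_normalizer
    have : Fact (Nat.Prime 3) := ⟨Nat.prime_three⟩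
    have hcyc : IsCyclic (M ⧸ (Subgroup.zpowers x).subgroupOf M) :=
      isCyclic_of_prime_card (p := 3) hr'
    rw [Subgroup.commutator_le]
    intro a ha b hb
    have h1 : (QuotientGroup.mk' ((Subgroup.zpowers x).subgroupOf M))
        ⁅(⟨a, ha⟩ : M), (⟨b, hb⟩ : M)⁆ = 1 := by
      rw [map_commutatorElement, commutatorElement_eq_one_iff_mul_comm]
      exact mul_comm' _ _
    rw [← MonoidHom.mem_ker, QuotientGroup.ker_mk', Subgroup.mem_subgroupOf] at h1
    exact h1
  -- hence they are central in `G'`, which has odd order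
  have hidx : (Subgroup.center (commutator G)).index = 1 := by
    by_contra hne
    obtain ⟨p, hp, hpd⟩ := Nat.exists_prime_and_dvd hne
    have hp2 : p ≠ 2 := by
      rintro rfl
      have h2 : 2 ∣ Nat.card N :=
        (hpd.trans (Subgroup.index_dvd_card _)).trans (Subgroup.card_dvd_of_le hDN)
      exact (Nat.not_even_iff_odd.2 hNodd) (even_iff_two_dvd.2 h2)
    refine not_dvd_index_of_forall _ hp (fun x m hx => ?_) hpd
    rw [Subgroup.mem_center_iff]
    intro y
    have hx' : orderOf (x : G) = p ^ m := by rw [Subgroup.orderOf_coe, hx]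
    have h1 := commutator_le_centralizer (hDnormal hp hp2 hx' x.2) y.2
    exact Subtype.ext (Subgroup.mem_centralizer_singleton_iff.1 h1)
  refine hD fun a b ha hb => ?_
  rw [Subgroup.index_eq_one] at hidx
  have h1 : (⟨b, hb⟩ : commutator G) ∈ Subgroup.center (commutator G) := hidx ▸ Subgroup.mem_top _
  exact congrArg Subtype.val (Subgroup.mem_center_iff.1 h1 ⟨a, ha⟩)

/-- A nontrivial normal subgroup of a finite 2-group contains a central involution. -/
lemma exists_central_involution {Q : Type*} [Group Q] [Finite Q] (hp : IsPGroup 2 Q)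
    (M : Subgroup Q) [M.Normal] (hM : M ≠ ⊥) :
    ∃ y ∈ M, y ≠ 1 ∧ y ^ 2 = 1 ∧ ∀ q : Q, q * y = y * q := by
  have : Fact (Nat.Prime 2) := ⟨Nat.prime_two⟩
  have hMnt : Nontrivial M := (Subgroup.nontrivial_iff_ne_bot M).2 hM
  have hpc : IsPGroup 2 (ConjAct Q) := hp
  obtain ⟨n, hn0, hn⟩ := (IsPGroup.nontrivial_iff_card (hp.to_subgroup M)).1 hMnt
  have hfix1 : (1 : M) ∈ MulAction.fixedPoints (ConjAct Q) M := fun g => smul_one g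
  obtain ⟨b, hb, hb1⟩ := hpc.exists_fixed_point_of_prime_dvd_card_of_fixed_point M
    (hn ▸ dvd_pow_self 2 hn0.ne') hfix1
  have hbc : ∀ q : Q, q * b = b * q := by
    intro q
    have h1 := congrArg Subtype.val (hb (ConjAct.toConjAct q))
    have h2 : q * (b : Q) * q⁻¹ = b := h1
    exact mul_inv_eq_iff_eq_mul.1 h2
  obtain ⟨k, hk⟩ := IsPGroup.iff_orderOf.1 hp (b : Q)
  have hk0 : k ≠ 0 := by
    rintro rfl
    rw [pow_zero, orderOf_eq_one_iff] at hk
    exact hb1 (Subtype.ext hk.symm)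
  obtain ⟨j, rfl⟩ := Nat.exists_eq_succ_of_ne_zero hk0
  refine ⟨(b : Q) ^ 2 ^ j, M.pow_mem b.2 _, ?_, ?_, fun q => ?_⟩
  · intro h1
    have h2 := Nat.le_of_dvd (by positivity) (orderOf_dvd_of_pow_eq_one h1)
    rw [hk, pow_succ] at h2
    have : 0 < 2 ^ j := by positivity
    omega
  · rw [← pow_mul, ← pow_succ, ← hk, pow_orderOf_eq_one]
  · exact ((show Commute q b from hbc q).pow_right _)

/-- If `y ∈ G'` maps to a central involution of `G / C`, where `C` centralizes `G'`, then `⟨y⟩` is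
not normal and does not contain `Z(G')`, whereas `y² ∈ Z(G')`; thus `|⟨y⟩| ≤ 2 |Z(G') ∩ ⟨y⟩| ≤ |C|`
and `|G : C| ≤ |G : ⟨y⟩| ≤ 16`. -/
lemma card_quotient_le_sixteen (h : tp G > (4 / 81 : ℚ)) {y : G} (hy : y ∈ commutator G)
    (hyC : y ∉ Subgroup.centralizer (commutator G : Set G))
    (hy2 : y ^ 2 ∈ Subgroup.centralizer (commutator G : Set G))
    (hyc : ∀ g : G, g * y * g⁻¹ * y⁻¹ ∈ Subgroup.centralizer (commutator G : Set G)) :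
    (Subgroup.centralizer (commutator G : Set G)).index ≤ 16 := by
  set C := Subgroup.centralizer (commutator G : Set G) with hC
  have hynn : ¬ (Subgroup.zpowers y).Normal := by
    intro hn
    refine hyC fun d hd => ?_
    exact Subgroup.mem_centralizer_singleton_iff.1 (commutator_le_centralizer hn hd)
  have h16 := index_le_sixteen _ h hynn
  -- `Z` is the centre of `G'`
  set Z := C ⊓ commutator G with hZ
  have hZy : ¬ Z ≤ Subgroup.zpowers y := by
    intro hle
    refine hynn ⟨?_⟩
    rintro _ ⟨n, rfl⟩ g
    change g * y ^ n * g⁻¹ ∈ _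
    rw [← conj_zpow]
    refine Subgroup.zpow_mem _ ?_ n
    have h1 : g * y * g⁻¹ * y⁻¹ ∈ Z := by
      refine ⟨hyc g, ?_⟩
      exact (commutator G).mul_mem
        ((inferInstance : (commutator G).Normal).conj_mem y hy g) ((commutator G).inv_mem hy)
    have h2 := Subgroup.mul_mem _ (hle h1) (Subgroup.mem_zpowers y)
    simpa using h2
  have hZ2 : 2 * Nat.card (Z ⊓ Subgroup.zpowers y : Subgroup G) ≤ Nat.card Z := by
    obtain ⟨d, hd⟩ := Subgroup.card_dvd_of_le (inf_le_left : Z ⊓ Subgroup.zpowers y ≤ Z)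
    rw [hd, mul_comm]
    refine Nat.mul_le_mul_left _ ?_
    by_contra! hlt
    have hpos : 0 < Nat.card Z := Nat.card_pos
    interval_cases d
    · omega
    · exact hZy (inf_eq_left.1 (Subgroup.eq_of_le_of_card_ge inf_le_left (by omega)))
  have hy2' : Subgroup.zpowers (y ^ 2) ≤ Z ⊓ Subgroup.zpowers y := by
    rw [Subgroup.zpowers_le]
    exact ⟨⟨hy2, (commutator G).pow_mem hy 2⟩, Subgroup.pow_mem _ (Subgroup.mem_zpowers y) 2⟩
  have hcy : Nat.card (Subgroup.zpowers y) ≤ 2 * Nat.card (Subgroup.zpowers (y ^ 2)) := by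
    rw [Nat.card_zpowers, Nat.card_zpowers]
    refine Nat.le_of_dvd (Nat.mul_pos two_pos (orderOf_pos _)) ?_
    rw [orderOf_dvd_iff_pow_eq_one, pow_mul, pow_orderOf_eq_one]
  have h1 := Subgroup.card_le_of_le hy2'
  have h2 : Nat.card Z ≤ Nat.card C := Subgroup.card_le_of_le inf_le_left
  have h3 : Nat.card (Subgroup.zpowers y) ≤ Nat.card C := by omega
  have h4 := C.card_mul_index
  have h5 := (Subgroup.zpowers y).card_mul_index
  have hpos : 0 < Nat.card C := Nat.card_pos
  refine Nat.le_of_mul_le_mul_left ?_ hpos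
  rw [h4, ← h5]
  exact Nat.mul_le_mul h3 h16

theorem commutator_comm (h : tp G > (4 / 81 : ℚ)) :
    ∀ a b : G, a ∈ commutator G → b ∈ commutator G → a * b = b * a := by
  by_contra hD
  set C := Subgroup.centralizer (commutator G : Set G) with hC
  have hCn : C.Normal := inferInstance
  let f := QuotientGroup.mk' C
  have hker : f.ker = C := QuotientGroup.ker_mk' C
  have hf : ∀ x, f x = 1 ↔ x ∈ C := fun x => by rw [← MonoidHom.mem_ker, hker]
  have hsurj : Function.Surjective f := QuotientGroup.mk'_surjective C
  have hp : IsPGroup 2 (G ⧸ C) := by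
    have hC0 : C.index ≠ 0 := Subgroup.index_ne_zero_of_finite
    refine IsPGroup.of_card (n := C.index.primeFactorsList.length) ?_
    change C.index = _
    refine Nat.eq_prime_pow_of_unique_prime_dvd hC0 ?_
    intro q hq hqd
    by_contra hq2
    refine not_dvd_index_of_forall C hq (fun x n hx => ?_) hqd
    intro d hd
    have h1 := commutator_le_centralizer (odd_zpowers_normal h hD hq hq2 hx) hd
    exact Subgroup.mem_centralizer_singleton_iff.1 h1
  have hmap : (commutator G).map f = commutator (G ⧸ C) := by
    rw [commutator_def, commutator_def, Subgroup.map_commutator, ← MonoidHom.range_eq_map,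
      MonoidHom.range_eq_top.2 hsurj]
  have hne : commutator (G ⧸ C) ≠ ⊥ := by
    intro hbot
    refine hD fun a b ha hb => ?_
    have : f b = 1 := by
      rw [← Subgroup.mem_bot, ← hbot, ← hmap]
      exact Subgroup.mem_map_of_mem f hb
    exact (hf b).1 this a ha
  obtain ⟨v, hv, hv1, hv2, hvc⟩ := exists_central_involution hp (commutator (G ⧸ C)) hne
  rw [← hmap] at hv
  obtain ⟨y, hy, rfl⟩ := hv
  have h16 : C.index ≤ 16 := by
    refine card_quotient_le_sixteen h hy (fun hyC => hv1 ((hf y).2 hyC)) ?_ fun g => ?_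
    · rw [← hf, map_pow, hv2]
    · rw [← hf, map_mul, map_mul, map_mul, hvc (f g), map_inv, map_inv]
      simp
  have hcyc : IsCyclic (commutator (G ⧸ C)) := commutator_isCyclic hp h16
  -- `G'` modulo its centre is cyclic
  let φ : commutator G →* commutator (G ⧸ C) :=
    (f.comp (commutator G).subtype).codRestrict _ fun d => by
      rw [← hmap]
      exact Subgroup.mem_map_of_mem f d.2
  have hφ : φ.ker ≤ Subgroup.center (commutator G) := by
    intro d hd
    have h1 : f d = 1 := congrArg Subtype.val hd
    rw [Subgroup.mem_center_iff]
    intro e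
    exact Subtype.ext ((hf d).1 h1 e e.2)
  refine hD fun a b ha hb => ?_
  have := MonoidHom.isMulCommutative_of_isCyclic_of_ker_le_center φ hφ
  exact congrArg Subtype.val (mul_comm' (⟨a, ha⟩ : commutator G) ⟨b, hb⟩)

end Main

theorem stmt19 (G : Type*) [Group G] [Finite G]
    (hna : ¬ ∀ a b : G, a * b = b * a) (h : tp G > (4 / 81 : ℚ)) :
    commutator G ≠ ⊥ ∧
      ∀ a b : G, a ∈ commutator G → b ∈ commutator G → a * b = b * a := by
  refine ⟨fun hbot => hna fun a b => ?_, commutator_comm h⟩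
  rw [← commutatorElement_eq_one_iff_mul_comm, ← Subgroup.mem_bot, ← hbot]
  exact Subgroup.commutator_mem_commutator (Subgroup.mem_top a) (Subgroup.mem_top b)
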